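/- arXiv:2005.13777 — 2 statements merged into one kernel-verified Lean document; each statement's English description precedes it below -/
import Mathlib

section
/- If an equivalence relation E on ℕ has only finitely many equivalence classes, then E < E⁺, i.e., E is computably reducible to E⁺ but E⁺ is not computably reducible to E. -/
/-- The `e`-th partial computable function. -/
def phi (e : ℕ) : ℕ →. ℕ :=
  Nat.Partrec.Code.eval (Denumerable.ofNat Nat.Partrec.Code e)

/-- `W_e`, the `e`-th c.e. set: the domain of `φ_e`. -/
def WSet (e : ℕ) : Set ℕ := (phi e).Dom

/-- The `E`-equivalence class of `k`. -/
def classOf (E : ℕ → ℕ → Prop) (k : ℕ) : Set ℕ := {x | E k x}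

/-- Computable reducibility of binary relations on ℕ. -/
def Reduces (E F : ℕ → ℕ → Prop) : Prop :=
  ∃ f : ℕ → ℕ, Computable f ∧ ∀ m n, E m n ↔ F (f m) (f n)

/-- The computable FS-jump of `E`: `e E⁺ e'` iff the set of `E`-classes of elements
of `ran φ_e` equals the set of `E`-classes of elements of `ran φ_{e'}`. -/
def FSJump (E : ℕ → ℕ → Prop) : ℕ → ℕ → Prop :=
  fun e e' => classOf E '' (phi e).ran = classOf E '' (phi e').ran

/-!
Sending `k` to an index of the constant function `k` reduces `E` to `E⁺`. In the other direction,
every finite set of naturals is the range of some `φ_e`, so if `E` has finitely many classes then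
every set of `E`-classes is named by some index. A reduction of `E⁺` to `E` would therefore inject
the power set of the set of `E`-classes into the set of `E`-classes, contradicting Cantor's theorem.
-/

theorem phi_encode (c : Nat.Partrec.Code) : phi (Encodable.encode c) = c.eval := by
  rw [phi, Denumerable.ofNat_encode]

theorem ran_phi_encode_const (k : ℕ) :
    (phi (Encodable.encode (Nat.Partrec.Code.const k))).ran = {k} := by
  ext x
  simp [phi_encode, PFun.ran]

theorem exists_phi_eq {g : ℕ →. ℕ} (hg : Partrec g) : ∃ e, phi e = g := by
  obtain ⟨c, hc⟩ := Nat.Partrec.Code.exists_code.1 (Partrec.nat_iff.1 hg)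
  exact ⟨Encodable.encode c, (phi_encode c).trans hc⟩

theorem exists_ran_phi_eq_of_finite {s : Set ℕ} (hs : s.Finite) : ∃ e, (phi e).ran = s := by
  let l := hs.toFinset.toList
  have partrec_get : Partrec fun n : ℕ => (l[n]? : Part ℕ) :=
    Computable.ofOption (Computable.list_getElem?.comp (Computable.const l) Computable.id)
  obtain ⟨e, he⟩ := exists_phi_eq partrec_get
  refine ⟨e, Set.ext fun x => ?_⟩
  calc
    x ∈ (phi e).ran ↔ ∃ n, l[n]? = some x := by simp [he, PFun.ran]
    _ ↔ x ∈ l := List.mem_iff_getElem?.symm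
    _ ↔ x ∈ s := by simp [l]

section

variable {E : ℕ → ℕ → Prop}

theorem classOf_eq_classOf_iff (hE : Equivalence E) {m n : ℕ} :
    classOf E m = classOf E n ↔ E m n := by
  refine ⟨fun h => ?_, fun h => Set.ext fun x => ⟨hE.trans (hE.symm h), hE.trans h⟩⟩
  have mem_classOf_self : n ∈ classOf E n := hE.refl n
  rwa [← h] at mem_classOf_self

theorem reduces_fsJump (hE : Equivalence E) : Reduces E (FSJump E) := by
  refine ⟨fun k => Encodable.encode (Nat.Partrec.Code.const k),
    (Primrec.encode.comp Nat.Partrec.Code.primrec_const).to_comp, fun m n => ?_⟩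
  simp only [FSJump, ran_phi_encode_const, Set.image_singleton, Set.singleton_eq_singleton_iff,
    classOf_eq_classOf_iff hE]

theorem exists_image_classOf_ran_phi_eq {C : Set (Set ℕ)} (hC : C.Finite)
    (hCE : C ⊆ Set.range (classOf E)) : ∃ e, classOf E '' (phi e).ran = C := by
  rw [← Set.image_univ] at hCE
  obtain ⟨s, -, hs, rfl⟩ := Set.exists_subset_image_finite_and.1 ⟨C, hCE, hC, rfl⟩
  obtain ⟨e, he⟩ := exists_ran_phi_eq_of_finite hs
  exact ⟨e, by rw [he]⟩

theorem exists_classOf_eq_and_not_fsJump (hfin : (Set.range (classOf E)).Finite) (f : ℕ → ℕ) :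
    ∃ m n, classOf E (f m) = classOf E (f n) ∧ ¬ FSJump E m n := by
  have exists_index (S : Set (Set.range (classOf E))) :
      ∃ e, classOf E '' (phi e).ran = Subtype.val '' S :=
    have hS : Subtype.val '' S ⊆ Set.range (classOf E) := Subtype.coe_image_subset _ S
    exists_image_classOf_ran_phi_eq (hfin.subset hS) hS
  choose index image_index using exists_index
  by_contra! fsJump_of_classOf_eq
  refine Function.cantor_injective
    (fun S => Set.rangeFactorization (classOf E) (f (index S))) fun S T hST => ?_
  have hjump : FSJump E (index S) (index T) :=
    fsJump_of_classOf_eq _ _ (congrArg Subtype.val hST)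
  rw [FSJump, image_index, image_index] at hjump
  exact Subtype.val_injective.image_injective hjump

end

/-- If an equivalence relation `E` on ℕ has only finitely many equivalence classes,
then `E < E⁺`: `E` is computably reducible to `E⁺` but not conversely. -/
theorem jump_strict_of_finitely_many_classes (E : ℕ → ℕ → Prop) (hE : Equivalence E)
    (hfin : (Set.range (classOf E)).Finite) :
    Reduces E (FSJump E) ∧ ¬ Reduces (FSJump E) E := by
  refine ⟨reduces_fsJump hE, fun ⟨f, _, hf⟩ => ?_⟩
  obtain ⟨m, n, hclass, hjump⟩ := exists_classOf_eq_and_not_fsJump hfin f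
  exact hjump ((hf m n).2 ((classOf_eq_classOf_iff hE).1 hclass))
end

section
/- If E is a ceer, then E⁺ is computably reducible to =^{ce}. In fact, there is a total computable f : ℕ → ℕ witnessing E⁺ ≤ =^{ce} such that W_{f(e)} is E-invariant for every e, and there is a total computable g : ℕ → ℕ such that for all e, e' with W_e and W_{e'} both E-invariant: W_e = W_{e'} if and only if g(e) E⁺ g(e'). -/
/-- Equality of c.e. sets: `e =^{ce} e'` iff `W_e = W_{e'}`. -/
def eqCE : ℕ → ℕ → Prop := fun e e' => WSet e = WSet e'

/-- A ceer: an equivalence relation on ℕ which is c.e. as a set of pairs. -/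
def Ceer (E : ℕ → ℕ → Prop) : Prop :=
  Equivalence E ∧ ∃ e : ℕ, ∀ m n : ℕ, E m n ↔ Nat.pair m n ∈ WSet e

/-- `W` is `E`-invariant: a union of `E`-classes. -/
def EInvariant (E : ℕ → ℕ → Prop) (W : Set ℕ) : Prop :=
  ∀ m n, E m n → m ∈ W → n ∈ W

/-!
The map `A ↦ ⋃ {[k]_E : k ∈ A}` sends two sets to the same `E`-invariant set exactly when they meet
the same `E`-classes, and it fixes every `E`-invariant set. When `E` is c.e., dovetailing the
computations of `φ_e` with the enumeration of `E` enumerates the image of `ran φ_e` uniformly in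
`e`, which gives `f`. Conversely, an index of the identity restricted to `W_e` serves as `g e`.
-/

section Saturation

/-- The `E`-saturation of `A`: the union of the `E`-classes of the elements of `A`. For an
equivalence relation `E`, it is an invariant set that determines the set `{[k]_E : k ∈ A}`. -/
def saturation (E : ℕ → ℕ → Prop) (A : Set ℕ) : Set ℕ := ⋃₀ (classOf E '' A)

variable {E : ℕ → ℕ → Prop} {A B : Set ℕ} {x y : ℕ}

theorem mem_saturation : x ∈ saturation E A ↔ ∃ k ∈ A, E k x := by
  simp [saturation, classOf]

theorem subset_saturation (hrefl : ∀ x, E x x) : A ⊆ saturation E A :=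
  fun x hx => mem_saturation.2 ⟨x, hx, hrefl x⟩

theorem eInvariant_saturation (htrans : ∀ {x y z}, E x y → E y z → E x z) :
    EInvariant E (saturation E A) := by
  intro m n hmn hm
  obtain ⟨k, hkA, hkm⟩ := mem_saturation.1 hm
  exact mem_saturation.2 ⟨k, hkA, htrans hkm hmn⟩

theorem EInvariant.saturation_eq (hA : EInvariant E A) (hrefl : ∀ x, E x x) :
    saturation E A = A := by
  refine Set.Subset.antisymm (fun x hx => ?_) (subset_saturation hrefl)
  obtain ⟨k, hkA, hkx⟩ := mem_saturation.1 hx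
  exact hA k x hkx hkA

theorem classOf_eq_of_rel (hE : Equivalence E) (hxy : E x y) : classOf E x = classOf E y :=
  Set.ext fun _ => ⟨hE.trans (hE.symm hxy), hE.trans hxy⟩

theorem image_classOf_saturation (hE : Equivalence E) :
    classOf E '' saturation E A = classOf E '' A := by
  refine Set.Subset.antisymm ?_ (Set.image_mono (subset_saturation hE.refl))
  rintro _ ⟨x, hx, rfl⟩
  obtain ⟨k, hkA, hkx⟩ := mem_saturation.1 hx
  exact ⟨k, hkA, classOf_eq_of_rel hE hkx⟩

theorem image_classOf_eq_iff_saturation_eq (hE : Equivalence E) :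
    classOf E '' A = classOf E '' B ↔ saturation E A = saturation E B := by
  refine ⟨congrArg Set.sUnion, fun h => ?_⟩
  rw [← image_classOf_saturation hE, h, image_classOf_saturation hE]

theorem EInvariant.image_classOf_eq_iff (hA : EInvariant E A) (hB : EInvariant E B)
    (hrefl : ∀ x, E x x) : classOf E '' A = classOf E '' B ↔ A = B := by
  refine ⟨fun h => ?_, congrArg _⟩
  rw [← hA.saturation_eq hrefl, ← hB.saturation_eq hrefl]
  exact congrArg Set.sUnion h

end Saturation

section RecursivelyEnumerable

open Encodable Nat.Partrec

variable {α β : Type*} [Primcodable α] [Primcodable β]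

theorem rePred_exists_mem {f : α →. β} {p : α × β → Prop} (hf : Partrec f) (hp : REPred p) :
    REPred fun a => ∃ b ∈ f a, p (a, b) :=
  (hf.bind hp.to₂).dom_re.of_eq fun a => by
    simp [Part.dom_iff_mem, Part.mem_assert_iff]

theorem rePred_exists {p : α × β → Prop} (hp : REPred p) : REPred fun a => ∃ b, p (a, b) := by
  obtain ⟨c, hc⟩ := Code.exists_code.1 hp
  have eval_dom (a : α) (m : ℕ) :
      (c.eval (Nat.pair (encode a) m)).Dom ↔ ∃ b, decode m = some b ∧ p (a, b) := by
    rcases hm : (decode m : Option β) with _ | b <;> simp [hc, hm, Part.assert]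
  -- Dovetailing: `s` codes a number of steps and a candidate for the code of a witness `b`.
  have partrec_search : Partrec fun a : α => Nat.rfindOpt fun s : ℕ =>
      Code.evaln s.unpair.1 c (Nat.pair (encode a) s.unpair.2) := by
    refine Partrec.rfindOpt (Code.primrec_evaln.comp (((Primrec.fst.comp ?_).pair
      (Primrec.const c)).pair (Primrec₂.natPair.comp ?_ (Primrec.snd.comp ?_)))).to_comp
    · exact Primrec.unpair.comp Primrec.snd
    · exact Primrec.encode.comp Primrec.fst
    · exact Primrec.unpair.comp Primrec.snd
  refine partrec_search.dom_re.of_eq fun a => ?_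
  calc
    _ ↔ ∃ t m y, y ∈ Code.evaln t c (Nat.pair (encode a) m) := by
      rw [Nat.rfindOpt_dom, Nat.pairEquiv.surjective.exists, Prod.exists]
      simp only [Nat.pairEquiv_apply, Function.uncurry_apply_pair, Nat.unpair_pair]
    _ ↔ ∃ m, (c.eval (Nat.pair (encode a) m)).Dom := by
      simp only [Part.dom_iff_mem, Code.evaln_complete]
      exact ⟨fun ⟨t, m, y, h⟩ => ⟨m, y, t, h⟩, fun ⟨m, y, t, h⟩ => ⟨t, m, y, h⟩⟩
    _ ↔ ∃ b, p (a, b) := by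
      simp only [eval_dom]
      exact ⟨fun ⟨_, b, _, hb⟩ => ⟨b, hb⟩, fun ⟨b, hb⟩ => ⟨encode b, b, encodek b, hb⟩⟩

end RecursivelyEnumerable

section Indices

open Encodable Nat.Partrec

variable {α : Type*} [Primcodable α]

theorem partrec₂_phi : Partrec₂ phi :=
  Code.eval_part.comp ((Computable.ofNat Code).comp Computable.fst) Computable.snd

theorem exists_computable_phi_eq {F : α → ℕ →. ℕ} (hF : Partrec₂ F) :
    ∃ f : α → ℕ, Computable f ∧ ∀ a, phi (f a) = F a := by
  obtain ⟨c, hc⟩ := Code.exists_code.1 hF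
  refine ⟨fun a => encode (Code.curry c (encode a)), ?_, fun a => ?_⟩
  · exact Computable.encode.comp
      (Code.primrec₂_curry.comp (Primrec.const c) Primrec.encode).to_comp
  · funext x
    have map_encode : (F a x).map encode = F a x := Part.map_id' encode_nat _
    simp [phi, Code.eval_curry, hc, map_encode]

theorem exists_computable_WSet_eq {p : α × ℕ → Prop} (hp : REPred p) :
    ∃ f : α → ℕ, Computable f ∧ ∀ a, WSet (f a) = {x | p (a, x)} := by
  obtain ⟨f, hf, hphi⟩ := exists_computable_phi_eq (hp.map (Computable.const 0).to₂).to₂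
  refine ⟨f, hf, fun a => Set.ext fun x => ?_⟩
  simp [WSet, hphi, Part.assert]

theorem exists_computable_ran_phi_eq_WSet :
    ∃ g : ℕ → ℕ, Computable g ∧ ∀ e, (phi (g e)).ran = WSet e := by
  have partrec_restrict_id : Partrec₂ fun e x : ℕ => (phi e x).map fun _ => x :=
    Partrec.map partrec₂_phi (Computable.snd.comp Computable.fst).to₂
  obtain ⟨g, hg, hphi⟩ := exists_computable_phi_eq partrec_restrict_id
  refine ⟨g, hg, fun e => Set.ext fun x => ?_⟩
  simp [hphi, PFun.ran, WSet]

end Indices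

section CeRelations

variable {E : ℕ → ℕ → Prop}

theorem Ceer.rePred (hE : Ceer E) : REPred fun p : ℕ × ℕ => E p.1 p.2 := by
  obtain ⟨-, c, hc⟩ := hE
  have partrec_phi_pair : Partrec fun p : ℕ × ℕ => phi c (Nat.pair p.1 p.2) :=
    partrec₂_phi.comp (Computable.const c) Primrec₂.natPair.to_comp
  exact partrec_phi_pair.dom_re.of_eq fun p => (hc p.1 p.2).symm

theorem rePred_mem_saturation_ran_phi (hE : REPred fun p : ℕ × ℕ => E p.1 p.2) :
    REPred fun p : ℕ × ℕ => p.2 ∈ saturation E (phi p.1).ran := by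
  have partrec_phi : Partrec fun q : (ℕ × ℕ) × ℕ => phi q.1.1 q.2 :=
    partrec₂_phi.comp (Computable.fst.comp Computable.fst) Computable.snd
  have rePred_rel : REPred fun r : ((ℕ × ℕ) × ℕ) × ℕ => E r.2 r.1.1.2 :=
    Partrec.comp hE (Computable.snd.pair
      (Computable.snd.comp (Computable.fst.comp Computable.fst)))
  refine (rePred_exists (rePred_exists_mem partrec_phi rePred_rel)).of_eq fun p => ?_
  rw [mem_saturation]
  exact ⟨fun ⟨n, k, hk, hkx⟩ => ⟨k, ⟨n, hk⟩, hkx⟩, fun ⟨k, ⟨n, hk⟩, hkx⟩ => ⟨n, k, hk, hkx⟩⟩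

theorem exists_computable_WSet_eq_saturation (hE : REPred fun p : ℕ × ℕ => E p.1 p.2) :
    ∃ f : ℕ → ℕ, Computable f ∧ ∀ e, WSet (f e) = saturation E (phi e).ran :=
  exists_computable_WSet_eq (rePred_mem_saturation_ran_phi hE)

end CeRelations

/-- If `E` is a ceer then `E⁺ ≤ =^{ce}` via a reduction whose values are codes of
`E`-invariant sets; moreover `E⁺` is computably bireducible with the restriction of
`=^{ce}` to codes of `E`-invariant sets. -/
theorem jump_ceer_le_eqCE (E : ℕ → ℕ → Prop) (hE : Ceer E) :
    (∃ f : ℕ → ℕ, Computable f ∧ (∀ m n, FSJump E m n ↔ eqCE (f m) (f n)) ∧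
      ∀ e, EInvariant E (WSet (f e))) ∧
    (∃ g : ℕ → ℕ, Computable g ∧ ∀ e e', EInvariant E (WSet e) → EInvariant E (WSet e') →
      (WSet e = WSet e' ↔ FSJump E (g e) (g e'))) := by
  obtain ⟨f, hf, hWf⟩ := exists_computable_WSet_eq_saturation hE.rePred
  obtain ⟨g, hg, hrang⟩ := exists_computable_ran_phi_eq_WSet
  refine ⟨⟨f, hf, fun m n => ?_, fun e => ?_⟩, g, hg, fun e e' he he' => ?_⟩
  · rw [FSJump, eqCE, hWf, hWf, image_classOf_eq_iff_saturation_eq hE.1]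
  · rw [hWf]
    exact eInvariant_saturation hE.1.trans
  · rw [FSJump, hrang, hrang, he.image_classOf_eq_iff he' hE.1.refl]
end
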